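/- arXiv:2012.02632 — 2 statements merged into one kernel-verified Lean document; each statement's English description precedes it below -/
import Mathlib

section
/- Let ε_d, ε'_d > 0 be chosen for every dimension d so that the Lebesgue volume of the Euclidean ball B_{2,d}(ε_d) equals the Lebesgue volume of the ℓ∞ ball B_{∞,d}(ε'_d). Then the ratio Vol(B_{2,d}(ε_d) ∩ B_{∞,d}(ε'_d)) / Vol(B_{∞,d}(ε'_d)) tends to 0 as d → ∞. -/
open MeasureTheory Filter

/-- Upper bound on the Gamma function, in Stirling form with exponential room. -/
lemma aux_Gamma_le (s : ℝ) (hs : 0 < s) :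
    Real.Gamma (s + 1) ≤ 10 * (s / (0.9 * Real.exp 1)) ^ s := by
  rw [Real.Gamma_eq_integral (by linarith)]
  have hint : IntegrableOn (fun x : ℝ => Real.exp ((-0.1) * x)) (Set.Ioi 0) :=
    integrableOn_exp_mul_Ioi (by norm_num) 0
  have hval : ∫ x in Set.Ioi (0:ℝ), Real.exp ((-0.1) * x) = 10 := by
    rw [integral_exp_mul_Ioi (by norm_num) 0]; norm_num
  calc ∫ x in Set.Ioi (0:ℝ), Real.exp (-x) * x ^ (s + 1 - 1)
      ≤ ∫ x in Set.Ioi (0:ℝ), Real.exp ((-0.1) * x) * (s / (0.9 * Real.exp 1)) ^ s := by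
        apply setIntegral_mono_on (Real.GammaIntegral_convergent (by linarith))
          (hint.mul_const _) measurableSet_Ioi
        intro x hx
        have hx : 0 < x := hx
        rw [add_sub_cancel_right, Real.rpow_def_of_pos hx, Real.rpow_def_of_pos (by positivity),
          ← Real.exp_add, ← Real.exp_add, Real.exp_le_exp]
        have h1 := Real.log_le_sub_one_of_pos (show 0 < x * 0.9 / s by positivity)
        rw [Real.log_div (by positivity) hs.ne', Real.log_mul hx.ne' (by norm_num)] at h1
        rw [Real.log_div hs.ne' (by positivity), Real.log_mul (by norm_num) (by positivity),
          Real.log_exp]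
        have h2 := mul_le_mul_of_nonneg_right h1 hs.le
        have h3 : (x * 0.9 / s - 1) * s = x * 0.9 - s := by field_simp
        rw [h3] at h2
        nlinarith
    _ = _ := by rw [integral_mul_const, hval]

/-- Volume of the cube. -/
lemma aux_cube (d : ℕ) (a : ℝ) :
    volume {x : EuclideanSpace ℝ (Fin d) | ∀ i, |x i| ≤ a} = ENNReal.ofReal (2 * a) ^ d := by
  have h : {x : EuclideanSpace ℝ (Fin d) | ∀ i, |x i| ≤ a}
      = (@WithLp.ofLp 2 (Fin d → ℝ)) ⁻¹' (Set.univ.pi fun _ => Set.Icc (-a) a) := by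
    ext x; simp [abs_le, Pi.le_def, forall_and]
  rw [h, (PiLp.volume_preserving_ofLp (Fin d)).measure_preimage
    (MeasurableSet.univ_pi fun _ => measurableSet_Icc).nullMeasurableSet, volume_pi_pi]
  simp [Real.volume_Icc, two_mul]

/-- The equal-volume condition bounds the radius. -/
lemma aux_radius (d : ℕ) (hd : 0 < d) (e a : ℝ) (he : 0 < e) (ha : 0 < a)
    (hbig : (10:ℝ) < 1.03 ^ d)
    (hvol : volume {x : EuclideanSpace ℝ (Fin d) | ‖x‖ ≤ e}
      = volume {x : EuclideanSpace ℝ (Fin d) | ∀ i, |x i| ≤ a}) :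
    (e / a) ^ 2 ≤ 0.28 * d := by
  have hd' : (0:ℝ) < d := by exact_mod_cast hd
  have : Nonempty (Fin d) := ⟨⟨0, hd⟩⟩
  have hball : {x : EuclideanSpace ℝ (Fin d) | ‖x‖ ≤ e} = Metric.closedBall 0 e := by
    ext x; simp
  have hG : 0 < Real.Gamma ((d:ℝ) / 2 + 1) := Real.Gamma_pos_of_pos (by positivity)
  rw [hball, aux_cube, EuclideanSpace.volume_closedBall, Fintype.card_fin,
    ← ENNReal.ofReal_pow he.le, ← ENNReal.ofReal_pow (by positivity),
    ← ENNReal.ofReal_mul (by positivity),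
    ENNReal.ofReal_eq_ofReal_iff (by positivity) (by positivity)] at hvol
  have hGle := aux_Gamma_le ((d:ℝ)/2) (by positivity)
  set z := √((d:ℝ) / 2 / (0.9 * Real.exp 1)) with hz
  have hzpos : 0 < z := Real.sqrt_pos.2 (by positivity)
  have hz2 : z ^ 2 = (d:ℝ) / 2 / (0.9 * Real.exp 1) := Real.sq_sqrt (by positivity)
  have hzd : ((d:ℝ) / 2 / (0.9 * Real.exp 1)) ^ ((d:ℝ)/2) = z ^ d := by
    rw [← hz2, ← Real.rpow_natCast, ← Real.rpow_mul hzpos.le, ← Real.rpow_natCast]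
    congr 1; push_cast; ring
  rw [hzd] at hGle
  set y := e * √Real.pi / (2 * a) with hy
  have hypos : 0 < y := by positivity
  have hyd : y ^ d = Real.Gamma ((d:ℝ) / 2 + 1) := by
    rw [hy, div_pow, mul_pow, ← hvol]; field_simp
  have hlt : y < 1.03 * z := by
    by_contra hcon
    push Not at hcon
    have h1 : (1.03 * z) ^ d ≤ y ^ d := pow_le_pow_left₀ (by positivity) hcon d
    rw [hyd, mul_pow] at h1
    have h2 : (10:ℝ) * z ^ d < 1.03 ^ d * z ^ d := by gcongr
    linarith
  have hy2 : y ^ 2 < 1.0609 * z ^ 2 := by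
    have := pow_lt_pow_left₀ hlt hypos.le (two_ne_zero)
    rw [mul_pow] at this; norm_num at this ⊢; exact this
  have hyy : y ^ 2 = (e / a) ^ 2 * (Real.pi / 4) := by
    rw [hy, div_pow, mul_pow, Real.sq_sqrt Real.pi_pos.le]; field_simp; norm_num
  rw [hyy, hz2] at hy2
  have hpi := Real.pi_gt_d2
  have hexp := Real.exp_one_gt_d9
  have hc : (1.0609:ℝ) * (d / 2 / (0.9 * Real.exp 1)) ≤ 0.2169 * d := by
    have : (d:ℝ) / 2 / (0.9 * Real.exp 1) ≤ d / 2 / (0.9 * 2.718) := by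
      gcongr; linarith
    have h3 : (d:ℝ) / 2 / (0.9 * 2.718) ≤ 0.20442 * d := by
      rw [div_div, div_le_iff₀ (by norm_num)]; nlinarith
    linarith
  nlinarith [sq_nonneg (e / a)]

/-- Chernoff bound. -/
lemma aux_chernoff (d : ℕ) (e a : ℝ) (ha : 0 < a) :
    volume ({x : EuclideanSpace ℝ (Fin d) | ‖x‖ ≤ e}
          ∩ {x : EuclideanSpace ℝ (Fin d) | ∀ i, |x i| ≤ a})
      ≤ ENNReal.ofReal (Real.exp (0.2 * (e / a) ^ 2) * (2 * a * (1 - 0.2 / 3 + 0.004)) ^ d) := by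
  set p : ℝ → ℝ := fun x => 1 - 0.2 * (x / a) ^ 2 + 0.02 * (x / a) ^ 4 with hp
  set f : ℝ → ℝ := (Set.Icc (-a) a).indicator p with hf
  have hpc : Continuous p := by fun_prop
  have hppos : ∀ x, 0 ≤ p x := fun x => by
    simp only [hp]; nlinarith [sq_nonneg ((x / a) ^ 2 - 5)]
  have hfint : Integrable f :=
    (hpc.continuousOn.integrableOn_compact isCompact_Icc).integrable_indicator measurableSet_Icc
  have hf0 : ∀ x, 0 ≤ f x := fun x => Set.indicator_nonneg (fun x _ => hppos x) x
  have hfval : ∫ x, f x = 2 * a * (1 - 0.2 / 3 + 0.004) := by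
    rw [hf, integral_indicator measurableSet_Icc, integral_Icc_eq_integral_Ioc,
      ← intervalIntegral.integral_of_le (by linarith)]
    have hder : ∀ x ∈ Set.uIcc (-a) a, HasDerivAt
        (fun x => x - 0.2 / 3 * (x ^ 3 / a ^ 2) + 0.004 * (x ^ 5 / a ^ 4)) (p x) x := by
      intro x _
      have h1 := ((hasDerivAt_pow 3 x).div_const (a ^ 2)).const_mul (0.2 / 3 : ℝ)
      have h2 := ((hasDerivAt_pow 5 x).div_const (a ^ 4)).const_mul (0.004 : ℝ)
      refine (((hasDerivAt_id x).sub h1).add h2).congr_deriv ?_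
      simp only [hp]; push_cast; field_simp; norm_num; ring
    rw [intervalIntegral.integral_eq_sub_of_hasDerivAt hder (hpc.intervalIntegrable _ _)]
    field_simp; ring
  set S : Set (Fin d → ℝ) := {x | ∑ i, (x i) ^ 2 ≤ e ^ 2 ∧ ∀ i, |x i| ≤ a} with hS
  have hSm : MeasurableSet S := by
    apply IsClosed.measurableSet
    rw [hS, Set.ofPred_and]
    apply IsClosed.inter
    · exact isClosed_le (by fun_prop) continuous_const
    · rw [Set.ofPred_forall]
      exact isClosed_iInter fun i => isClosed_le (by fun_prop) continuous_const
  have hsub : ({x : EuclideanSpace ℝ (Fin d) | ‖x‖ ≤ e}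
          ∩ {x : EuclideanSpace ℝ (Fin d) | ∀ i, |x i| ≤ a})
      ⊆ (@WithLp.ofLp 2 (Fin d → ℝ)) ⁻¹' S := by
    rintro x ⟨hx1, hx2⟩
    refine ⟨?_, hx2⟩
    have hx1 : ‖x‖ ≤ e := hx1
    have := pow_le_pow_left₀ (norm_nonneg x) hx1 2
    rw [EuclideanSpace.norm_sq_eq] at this
    simpa using this
  refine (measure_mono hsub).trans ?_
  rw [(PiLp.volume_preserving_ofLp (Fin d)).measure_preimage hSm.nullMeasurableSet]
  have hFint : Integrable (fun x : Fin d → ℝ => Real.exp (0.2 * (e / a) ^ 2) * ∏ i, f (x i)) :=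
    (Integrable.fintype_prod (μ := fun _ => volume) (fun _ => hfint)).const_mul _
  have hFval : ∫ x : Fin d → ℝ, Real.exp (0.2 * (e / a) ^ 2) * ∏ i, f (x i)
      = Real.exp (0.2 * (e / a) ^ 2) * (2 * a * (1 - 0.2 / 3 + 0.004)) ^ d := by
    rw [integral_const_mul, integral_fintype_prod_volume_eq_pow, hfval, Fintype.card_fin]
  rw [← hFval, ofReal_integral_eq_lintegral_ofReal hFint
    (ae_of_all _ fun x => mul_nonneg (Real.exp_pos _).le (Finset.prod_nonneg fun i _ => hf0 _))]
  rw [← lintegral_indicator_one hSm]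
  apply lintegral_mono
  intro x
  by_cases hx : x ∈ S
  · rw [Set.indicator_of_mem hx]
    simp only [Pi.one_apply]
    rw [ENNReal.one_le_ofReal]
    obtain ⟨hx1, hx2⟩ := hx
    have hpt : ∀ i, Real.exp (-(0.2 * (x i / a) ^ 2)) ≤ f (x i) := by
      intro i
      rw [hf, Set.indicator_of_mem (Set.mem_Icc.2 (abs_le.1 (hx2 i)))]
      set u := 0.2 * (x i / a) ^ 2 with hu
      have hu0 : 0 ≤ u := by positivity
      have hpu : p (x i) = 1 - u + u ^ 2 / 2 := by simp only [hp, hu]; ring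
      rw [hpu, Real.exp_neg, inv_le_iff_one_le_mul₀ (Real.exp_pos _)]
      have hq := Real.quadratic_le_exp_of_nonneg hu0
      have hq0 : 0 ≤ 1 - u + u ^ 2 / 2 := by nlinarith [sq_nonneg (u - 1)]
      have := mul_le_mul_of_nonneg_left hq hq0
      nlinarith [sq_nonneg (u ^ 2)]
    calc (1:ℝ) ≤ Real.exp (0.2 * (e / a) ^ 2 + ∑ i, -(0.2 * (x i / a) ^ 2)) := by
          rw [Real.one_le_exp_iff, Finset.sum_neg_distrib, ← Finset.mul_sum]
          simp only [div_pow]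
          rw [← Finset.sum_div]
          have : (∑ i, x i ^ 2) / a ^ 2 ≤ e ^ 2 / a ^ 2 := by gcongr
          linarith
      _ = Real.exp (0.2 * (e / a) ^ 2) * ∏ i, Real.exp (-(0.2 * (x i / a) ^ 2)) := by
          rw [Real.exp_add, Real.exp_sum]
      _ ≤ _ := by
          gcongr with i
          exact hpt i
  · rw [Set.indicator_of_notMem hx]; exact zero_le

/-- If for every dimension `d` the radii `ε d, ε' d > 0` are chosen so that the
Lebesgue volume of the Euclidean ball `B_{2,d}(ε d)` equals the Lebesgue volume of the
`ℓ∞` ball `B_{∞,d}(ε' d)`, then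
`Vol(B_{2,d}(ε d) ∩ B_{∞,d}(ε' d)) / Vol(B_{∞,d}(ε' d)) → 0` as `d → ∞`. -/
theorem volume_ratio_inter_ball_tendsto_zero
    (ε ε' : ℕ → ℝ) (hε : ∀ d, 0 < ε d) (hε' : ∀ d, 0 < ε' d)
    (hvol : ∀ d, volume {x : EuclideanSpace ℝ (Fin d) | ‖x‖ ≤ ε d}
      = volume {x : EuclideanSpace ℝ (Fin d) | ∀ i, |x i| ≤ ε' d}) :
    Tendsto (fun d : ℕ =>
      volume ({x : EuclideanSpace ℝ (Fin d) | ‖x‖ ≤ ε d}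
          ∩ {x : EuclideanSpace ℝ (Fin d) | ∀ i, |x i| ≤ ε' d})
        / volume {x : EuclideanSpace ℝ (Fin d) | ∀ i, |x i| ≤ ε' d})
      atTop (nhds 0) := by
  have hlim : Tendsto (fun d : ℕ => ENNReal.ofReal ((Real.exp (-(1/200))) ^ d)) atTop (nhds 0) := by
    have h := tendsto_pow_atTop_nhds_zero_of_lt_one (Real.exp_pos (-(1/200))).le
      (by rw [Real.exp_lt_one_iff]; norm_num)
    simpa using ENNReal.tendsto_ofReal h
  refine tendsto_of_tendsto_of_tendsto_of_le_of_le' tendsto_const_nhds hlim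
    (Eventually.of_forall fun _ => zero_le) ?_
  have hbig : ∀ᶠ d : ℕ in atTop, (10:ℝ) < 1.03 ^ d :=
    (tendsto_pow_atTop_atTop_of_one_lt (by norm_num)).eventually_gt_atTop 10
  filter_upwards [hbig, eventually_gt_atTop 0] with d hb hd
  have hr := aux_radius d hd (ε d) (ε' d) (hε d) (hε' d) hb (hvol d)
  have ha := hε' d
  have hc := aux_chernoff d (ε d) (ε' d) ha
  rw [aux_cube]
  apply ENNReal.div_le_of_le_mul
  refine hc.trans ?_
  rw [← ENNReal.ofReal_pow (by positivity), ← ENNReal.ofReal_mul (by positivity)]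
  apply ENNReal.ofReal_le_ofReal
  rw [mul_pow (2 * ε' d), mul_left_comm, mul_comm _ ((2 * ε' d) ^ d)]
  gcongr
  calc Real.exp (0.2 * (ε d / ε' d) ^ 2) * (1 - 0.2 / 3 + 0.004) ^ d
      ≤ Real.exp (0.2 * (0.28 * d)) * (Real.exp (-0.2/3 + 0.004)) ^ d := by
        gcongr
        linarith [Real.add_one_le_exp (-0.2/3 + 0.004 : ℝ)]
    _ ≤ Real.exp (-(1/200)) ^ d := by
        rw [← Real.exp_nat_mul, ← Real.exp_nat_mul, ← Real.exp_add, Real.exp_le_exp]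
        have : (0:ℝ) < d := by exact_mod_cast hd
        nlinarith
end

section
/- Fix 1 ≤ p < q ≤ ∞ with p ≠ q. For every dimension d, let ε_d, ε'_d > 0 be chosen so that the Lebesgue volume of the ℓ_p ball B_{p,d}(ε_d) equals the Lebesgue volume of the ℓ_q ball B_{q,d}(ε'_d). Then the ratio Vol(B_{p,d}(ε_d) ∩ B_{q,d}(ε'_d)) / Vol(B_{q,d}(ε'_d)) tends to 0 as d → ∞. -/
open MeasureTheory ENNReal Filter

/-- An elementary upper bound for the Gamma function. -/
lemma gamma_upper {x θ : ℝ} (hx : 0 < x) (h0 : 0 < θ) (h1 : θ < 1) :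
    Real.Gamma (x + 1) ≤ x ^ x * Real.exp (-x) * (θ ^ x)⁻¹ * (1 - θ)⁻¹ := by
  have h1' : 0 < 1 - θ := by linarith
  rw [Real.Gamma_eq_integral (by linarith)]
  have key : ∀ t ∈ Set.Ioi (0:ℝ), Real.exp (-t) * t ^ (x + 1 - 1) ≤
      (x ^ x * Real.exp (-x) * (θ ^ x)⁻¹) * Real.exp (-(1 - θ) * t) := by
    intro t ht
    have ht : 0 < t := ht
    have e1 : θ * t / x ≤ Real.exp (θ * t / x - 1) := by
      have := Real.add_one_le_exp (θ * t / x - 1); linarith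
    have e2 : (θ * t / x) ^ x ≤ Real.exp (θ * t - x) := by
      calc _ ≤ (Real.exp (θ * t / x - 1)) ^ x := Real.rpow_le_rpow (by positivity) e1 hx.le
        _ = _ := by rw [← Real.exp_mul]; congr 1; field_simp
    rw [Real.div_rpow (by positivity) hx.le, Real.mul_rpow h0.le ht.le, div_le_iff₀ (by positivity)] at e2
    have e3 : Real.exp (-t) * Real.exp (θ * t - x) = Real.exp (-x) * Real.exp (-(1-θ)*t) := by
      rw [← Real.exp_add, ← Real.exp_add]; congr 1; ring
    have hθ : 0 < θ ^ x := by positivity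
    rw [add_sub_cancel_right]
    calc Real.exp (-t) * t ^ x = (θ ^ x)⁻¹ * Real.exp (-t) * (θ ^ x * t ^ x) := by field_simp
      _ ≤ (θ ^ x)⁻¹ * Real.exp (-t) * (Real.exp (θ * t - x) * x ^ x) := by gcongr
      _ = (θ ^ x)⁻¹ * x ^ x * (Real.exp (-t) * Real.exp (θ * t - x)) := by ring
      _ = _ := by rw [e3]; ring
  calc _ ≤ ∫ t in Set.Ioi (0:ℝ), (x ^ x * Real.exp (-x) * (θ ^ x)⁻¹) * Real.exp (-(1 - θ) * t) := by
        apply setIntegral_mono_on (Real.GammaIntegral_convergent (by linarith)) _ measurableSet_Ioi key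
        exact (integrableOn_exp_mul_Ioi (by linarith) 0).const_mul _
    _ = _ := by
        rw [integral_const_mul, integral_exp_mul_Ioi (by linarith)]
        have : θ - 1 ≠ 0 := by linarith
        have h2 : 1 - θ ≠ 0 := h1'.ne'
        simp only [mul_zero, Real.exp_zero]
        field_simp

/-- The `ℓ_p` ball. -/
def lpB (p : ℝ≥0∞) [Fact (1 ≤ p)] (d : ℕ) (r : ℝ) : Set (Fin d → ℝ) :=
  {x : Fin d → ℝ | ‖(WithLp.equiv p (Fin d → ℝ)).symm x‖ ≤ r}

structure Good (p : ℝ≥0∞) [Fact (1 ≤ p)] (G : ℝ → ℝ) (R : ℕ → ℝ) : Prop where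
  nonneg : ∀ t, 0 ≤ G t
  cont : ContinuousAt G 0
  meas : Measurable G
  int : ∫ t, G t = 1
  zero : G 0 = Real.exp (p⁻¹).toReal
  pos : ∀ d, 1 ≤ d → 0 < R d
  le : ∀ d, 1 ≤ d → ∀ x ∈ lpB p d (R d), 1 ≤ ∏ i, G (x i)
  vol : ∀ κ : ℝ, 0 < κ → κ < 1 → ∃ c : ℝ, 0 < c ∧ ∀ d, 1 ≤ d →
    ENNReal.ofReal (c * κ ^ d) ≤ volume (lpB p d (R d))

lemma good_top : Good ∞ (Set.indicator (Set.Icc (-(1/2):ℝ) (1/2)) 1) (fun _ => 1/2) where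
  nonneg t := Set.indicator_nonneg (by simp) t
  cont := by
    apply ContinuousAt.congr (f := fun _ => (1:ℝ)) continuousAt_const
    filter_upwards [Icc_mem_nhds (show (-(1/2):ℝ) < 0 by norm_num) (show (0:ℝ) < 1/2 by norm_num)] with t ht
    rw [Set.indicator_of_mem ht]; rfl
  meas := measurable_one.indicator measurableSet_Icc
  int := by
    rw [integral_indicator_one measurableSet_Icc]; simp; norm_num
  zero := by rw [Set.indicator_of_mem (by norm_num)]; simp
  pos _ _ := by norm_num
  le d hd x hx := by
    have : ∀ i, x i ∈ Set.Icc (-(1/2):ℝ) (1/2) := by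
      intro i
      have h : ‖x i‖ ≤ 1/2 := (PiLp.norm_apply_le ((WithLp.equiv ∞ (Fin d → ℝ)).symm x) i).trans hx
      rw [Real.norm_eq_abs, abs_le] at h
      exact h
    simp only [Set.indicator_of_mem (this _), Pi.one_apply, Finset.prod_const_one, le_refl]
  vol κ h0 h1 := by
    refine ⟨1, one_pos, fun d hd => ?_⟩
    have : lpB ∞ d (1/2) = Set.Icc (fun _ => (-(1/2):ℝ)) (fun _ => 1/2) := by
      have : Nonempty (Fin d) := ⟨⟨0, hd⟩⟩
      ext x
      have : ‖(WithLp.equiv ∞ (Fin d → ℝ)).symm x‖ = ‖x‖ := PiLp.norm_toLp x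
      rw [lpB, Set.mem_ofPred_eq, this, pi_norm_le_iff_of_nonneg (by norm_num)]
      simp only [Real.norm_eq_abs, abs_le, Set.mem_Icc, Pi.le_def, forall_and]
    rw [this, Real.volume_Icc_pi]
    norm_num
    exact pow_le_one₀ h0.le h1.le

noncomputable def cA (p : ℝ) : ℝ := 2 * Real.Gamma (1/p + 1) * Real.exp (1/p)
lemma cA_pos {p : ℝ} (hp : 0 < p) : 0 < cA p := by
  have := Real.Gamma_pos_of_pos (show 0 < 1/p+1 by positivity)
  unfold cA; positivity
noncomputable def dG (p : ℝ) (t : ℝ) : ℝ := Real.exp (1/p + -(cA p) ^ p * |t| ^ p)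
noncomputable def rR (p : ℝ) (d : ℕ) : ℝ := (cA p)⁻¹ * (d / p) ^ (1/p)

lemma mem_lpB_iff (p : ℝ≥0∞) [Fact (1 ≤ p)] (hp : p ≠ ∞) (d : ℕ) (r : ℝ) (x : Fin d → ℝ) :
    x ∈ lpB p d r ↔ (∑ i, |x i| ^ p.toReal) ^ (1 / p.toReal) ≤ r := by
  have h0 : 0 < p.toReal := ENNReal.toReal_pos (by have := Fact.out (p := 1 ≤ p); positivity) hp
  rw [lpB, Set.mem_ofPred_eq, PiLp.norm_eq_sum h0]
  rfl

lemma dG_prod (p : ℝ≥0∞) [Fact (1 ≤ p)] (hp : p ≠ ∞) (d : ℕ) (hd : 1 ≤ d) (u : ℝ) (hu : 0 < u)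
    (x) (hx : x ∈ lpB p d (u * rR p.toReal d)) :
    Real.exp ((1 - u ^ p.toReal) / p.toReal) ^ d ≤ ∏ i, dG p.toReal (x i) := by
  have h0 : 0 < p.toReal := ENNReal.toReal_pos (by have := Fact.out (p := 1 ≤ p); positivity) hp
  rw [mem_lpB_iff p hp] at hx
  set P := p.toReal
  have hA := cA_pos h0
  have hd' : 0 < (d:ℝ) := by exact_mod_cast hd
  have hs : ∑ i, |x i| ^ P ≤ u ^ P * ((cA P) ^ P)⁻¹ * (d / P) := by
    have h := Real.rpow_le_rpow (by positivity) hx h0.le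
    rw [← Real.rpow_mul (by positivity), one_div_mul_cancel h0.ne', Real.rpow_one, rR,
      Real.mul_rpow hu.le (by positivity), Real.mul_rpow (by positivity) (by positivity),
      ← Real.rpow_mul (by positivity), one_div_mul_cancel h0.ne', Real.rpow_one,
      Real.inv_rpow hA.le, ← mul_assoc] at h
    exact h
  unfold dG
  rw [← Real.exp_sum, ← Real.exp_nat_mul, Real.exp_le_exp, Finset.sum_add_distrib, ← Finset.mul_sum]
  have hAP : 0 < cA P ^ P := by positivity
  have h2 := mul_le_mul_of_nonneg_left hs hAP.le
  have h3 : cA P ^ P * (u ^ P * ((cA P) ^ P)⁻¹ * (d / P)) = u ^ P * (d / P) := by field_simp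
  rw [h3] at h2
  simp only [Finset.sum_const, Finset.card_univ, Fintype.card_fin, nsmul_eq_mul]
  have h4 : (d:ℝ) * ((1 - u ^ P)/P) = d * (1/P) - u ^ P * (d/P) := by ring
  rw [h4]
  linarith

lemma good_fin (p : ℝ≥0∞) [Fact (1 ≤ p)] (hp : p ≠ ∞) : Good p (dG p.toReal) (rR p.toReal) := by
  have hf := Fact.out (p := 1 ≤ p)
  have h1 : 1 ≤ p.toReal := by
    simpa using ENNReal.toReal_mono hp hf
  have h0 : 0 < p.toReal := by linarith
  have hA := cA_pos h0
  have hG := Real.Gamma_pos_of_pos (show 0 < 1/p.toReal+1 by positivity)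
  have hc : Continuous (dG p.toReal) := by
    unfold dG
    have : Continuous (fun t : ℝ => |t| ^ p.toReal) := continuous_abs.rpow_const (fun _ => Or.inr h0.le)
    fun_prop
  have hpos : ∀ d : ℕ, 1 ≤ d → 0 < rR p.toReal d := by
    intro d hd
    have hd' : 0 < (d:ℝ) := by exact_mod_cast hd
    unfold rR; positivity
  refine ⟨fun t => (Real.exp_pos _).le, hc.continuousAt, hc.measurable, ?_, ?_, hpos, ?_, ?_⟩
  · unfold dG
    simp_rw [Real.exp_add]
    rw [integral_const_mul, integral_comp_abs (f := fun t => Real.exp (-(cA p.toReal) ^ p.toReal * t ^ p.toReal)),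
      integral_exp_neg_mul_rpow h0 (by positivity), ← Real.rpow_mul hA.le,
      mul_div_cancel₀ _ h0.ne', Real.rpow_neg_one]
    conv_lhs => enter [2,2,1]; rw [cA]
    have := Real.exp_pos (1/p.toReal)
    field_simp
  · simp [dG, Real.zero_rpow h0.ne']
  · intro d hd x hx
    have := dG_prod p hp d hd 1 one_pos x (by simpa using hx)
    simpa using this
  · intro κ k0 k1
    have hk : κ ^ p.toReal < 1 := Real.rpow_lt_one k0.le k1 h0
    refine ⟨1 - κ ^ p.toReal, by linarith, fun d hd => ?_⟩
    have hd' : 0 < (d:ℝ) := by exact_mod_cast hd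
    have : Nonempty (Fin d) := ⟨⟨0, hd⟩⟩
    have e : lpB p d (rR p.toReal d) = {x : Fin d → ℝ | (∑ i, |x i| ^ p.toReal) ^ (1 / p.toReal) ≤ rR p.toReal d} := by
      ext x; exact mem_lpB_iff p hp d _ x
    rw [e, volume_sum_rpow_le _ h1, ← ENNReal.ofReal_pow (hpos d hd).le, ← ENNReal.ofReal_mul (by have := hpos d hd; positivity)]
    apply ENNReal.ofReal_le_ofReal
    rw [Fintype.card_fin]
    set P := p.toReal
    have hx : 0 < d / P := by positivity
    have g := gamma_upper hx (show 0 < κ ^ P by positivity) hk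
    have gp := Real.Gamma_pos_of_pos (show 0 < d / P + 1 by positivity)
    have e1 : (κ ^ P) ^ (d / P) = κ ^ d := by
      rw [← Real.rpow_mul k0.le, mul_div_cancel₀ _ h0.ne', Real.rpow_natCast]
    have e2 : rR P d ^ d * (2 * Real.Gamma (1/P+1)) ^ d = (d/P)^(d/P) * Real.exp (-(d/P)) := by
      have a1 : rR P d * (2 * Real.Gamma (1/P+1)) = (d/P)^(1/P) * Real.exp (-(1/P)) := by
        rw [rR, cA, Real.exp_neg]; field_simp
      rw [← mul_pow, a1, mul_pow, ← Real.rpow_mul_natCast hx.le, ← Real.exp_nat_mul]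
      congr 2 <;> ring
    rw [e1] at g
    rw [← mul_div_assoc, e2, le_div_iff₀ gp]
    have hk' : 0 < 1 - κ ^ P := by linarith
    calc _ ≤ (1 - κ^P) * κ^d * _ := mul_le_mul_of_nonneg_left g (by positivity)
      _ = _ := by field_simp

lemma affinity_lt {f g : ℝ → ℝ} (f0 : ∀ t, 0 ≤ f t) (g0 : ∀ t, 0 ≤ g t)
    (fm : Measurable f) (gm : Measurable g) (fc : ContinuousAt f 0) (gc : ContinuousAt g 0)
    (fi : ∫ t, f t = 1) (gi : ∫ t, g t = 1) (hne : f 0 ≠ g 0) :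
    Integrable (fun t => √(f t * g t)) ∧ ∫ t, √(f t * g t) < 1 := by
  have fI : Integrable f := Integrable.of_integral_ne_zero (by rw [fi]; exact one_ne_zero)
  have gI : Integrable g := Integrable.of_integral_ne_zero (by rw [gi]; exact one_ne_zero)
  have hid : ∀ t, f t + g t - 2 * √(f t * g t) = (√(f t) - √(g t)) ^ 2 := by
    intro t
    rw [Real.sqrt_mul (f0 t)]
    nlinarith [Real.sq_sqrt (f0 t), Real.sq_sqrt (g0 t)]
  have hI : Integrable (fun t => √(f t * g t)) := by
    apply Integrable.mono' (fI.add gI) (by fun_prop)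
    refine Eventually.of_forall fun t => ?_
    rw [Real.norm_of_nonneg (Real.sqrt_nonneg _), Pi.add_apply]
    nlinarith [hid t, sq_nonneg (√(f t) - √(g t)), Real.sqrt_nonneg (f t * g t)]
  refine ⟨hI, ?_⟩
  have hJ : Integrable (fun t => f t + g t - 2 * √(f t * g t)) := (fI.add gI).sub (hI.const_mul 2)
  have hint : ∫ t, (f t + g t - 2 * √(f t * g t)) = 2 - 2 * ∫ t, √(f t * g t) := by
    rw [integral_sub (f := fun t => f t + g t) (fI.add gI) (hI.const_mul 2), integral_add fI gI, fi, gi, integral_const_mul]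
    norm_num
  have hpos : 0 < ∫ t, (f t + g t - 2 * √(f t * g t)) := by
    rw [integral_pos_iff_support_of_nonneg (fun t => by simp only [hid]; exact sq_nonneg _) hJ]
    apply Measure.measure_pos_of_mem_nhds volume (x := 0)
    filter_upwards [(fc.sub gc).eventually_ne (sub_ne_zero.2 hne)] with t ht
    rw [Function.mem_support, hid]
    apply pow_ne_zero
    rw [sub_ne_zero]
    intro h
    exact ht (sub_eq_zero.2 ((Real.sqrt_inj (f0 t) (g0 t)).1 h))
  linarith

lemma chernoff {h : ℝ → ℝ} (h0 : ∀ t, 0 ≤ h t) (hI : Integrable h) (d : ℕ) (S : Set (Fin d → ℝ))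
    (hS : ∀ x ∈ S, 1 ≤ ∏ i, h (x i)) : volume S ≤ ENNReal.ofReal ((∫ t, h t) ^ d) := by
  have hP : Integrable (fun x : Fin d → ℝ => ∏ i, h (x i)) :=
    Integrable.fintype_prod (f := fun _ => h) (fun _ => hI)
  have e : ∫ x : Fin d → ℝ, ∏ i, h (x i) = (∫ t, h t) ^ d := by
    rw [integral_fintype_prod_volume_eq_pow, Fintype.card_fin]
  rw [← e, ofReal_integral_eq_lintegral_ofReal hP (Eventually.of_forall fun x => Finset.prod_nonneg fun i _ => h0 _)]
  apply meas_le_lintegral₀ hP.aestronglyMeasurable.aemeasurable.ennreal_ofReal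
  intro x hx
  rw [← ENNReal.ofReal_one]
  exact ENNReal.ofReal_le_ofReal (hS x hx)

open scoped Pointwise in
lemma lpB_smul (p : ℝ≥0∞) [Fact (1 ≤ p)] (d : ℕ) {t r : ℝ} (ht : 0 < t) :
    lpB p d (t * r) = t • lpB p d r := by
  ext x
  rw [Set.mem_smul_set_iff_inv_smul_mem₀ ht.ne']
  have : (WithLp.equiv p (Fin d → ℝ)).symm (t⁻¹ • x) = t⁻¹ • (WithLp.equiv p (Fin d → ℝ)).symm x := rfl
  rw [lpB, lpB, Set.mem_ofPred_eq, Set.mem_ofPred_eq, this, norm_smul, Real.norm_of_nonneg (by positivity),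
    inv_mul_le_iff₀ ht]

lemma exists_kappa {ρ P : ℝ} (hρ : ρ < 1) :
    ∃ κ : ℝ, 0 < κ ∧ κ < 1 ∧ Real.exp (((κ⁻¹ ^ 2) ^ P - 1) / (2 * P)) * ρ / κ < 1 := by
  have hc : ContinuousAt (fun κ : ℝ => Real.exp (((κ⁻¹ ^ 2) ^ P - 1) / (2 * P)) * ρ / κ) 1 := by
    have h1 : ContinuousAt (fun κ : ℝ => (κ⁻¹ ^ 2)) 1 :=
      (continuousAt_inv₀ one_ne_zero).pow 2
    have h2 : ContinuousAt (fun κ : ℝ => (κ⁻¹ ^ 2) ^ P) 1 := h1.rpow_const (Or.inl (by norm_num))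
    exact (((h2.sub continuousAt_const).div_const _).rexp.mul continuousAt_const).div continuousAt_id one_ne_zero
  have h := hc.eventually_lt_const (u := 1) (by simpa using hρ)
  have h' : ∀ᶠ κ in nhdsWithin (1:ℝ) (Set.Iio 1), Real.exp (((κ⁻¹ ^ 2) ^ P - 1) / (2 * P)) * ρ / κ < 1 :=
    h.filter_mono nhdsWithin_le_nhds
  have h3 : ∀ᶠ κ in nhdsWithin (1:ℝ) (Set.Iio 1), κ ∈ Set.Ioo (0:ℝ) 1 :=
    Ioo_mem_nhdsLT one_pos
  obtain ⟨κ, a, b⟩ := (h'.and h3).exists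
  exact ⟨κ, b.1, b.2, a⟩

open scoped Pointwise in
lemma main_aux (p q : ℝ≥0∞) [Fact (1 ≤ p)] [Fact (1 ≤ q)] (hpq : p < q) (g : ℝ → ℝ) (R : ℕ → ℝ)
    (hq : Good q g R)
    (ε ε' : ℕ → ℝ) (hε : ∀ d, 0 < ε d) (hε' : ∀ d, 0 < ε' d)
    (hvol : ∀ d, volume (lpB p d (ε d)) = volume (lpB q d (ε' d))) :
    Tendsto (fun d : ℕ => volume (lpB p d (ε d) ∩ lpB q d (ε' d)) / volume (lpB q d (ε' d)))
      atTop (nhds 0) := by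
  have hp : p ≠ ∞ := hpq.ne_top
  have hP0 : 0 < p.toReal := ENNReal.toReal_pos (by have := Fact.out (p := 1 ≤ p); positivity) hp
  have hf := good_fin p hp
  set P := p.toReal with hPdef
  set f := dG P with hfdef
  have hne : f 0 ≠ g 0 := by
    rw [hf.zero, hq.zero]
    have hq0 : q⁻¹ < p⁻¹ := ENNReal.inv_lt_inv.2 hpq
    have hpi : p⁻¹ ≠ ∞ := ENNReal.inv_ne_top.2 (by have := Fact.out (p := 1 ≤ p); positivity)
    have := (ENNReal.toReal_lt_toReal hq0.ne_top hpi).2 hq0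
    intro h
    rw [Real.exp_eq_exp] at h
    linarith
  obtain ⟨hI, hρ⟩ := affinity_lt hf.nonneg hq.nonneg hf.meas hq.meas hf.cont hq.cont hf.int hq.int hne
  have gI : Integrable g := Integrable.of_integral_ne_zero (by rw [hq.int]; exact one_ne_zero)
  set ρ := ∫ t, √(f t * g t) with hρd
  have hρ0 : 0 ≤ ρ := integral_nonneg fun t => Real.sqrt_nonneg _
  obtain ⟨κ, k0, k1, hk⟩ := exists_kappa (P := P) hρ
  set K := κ⁻¹ ^ 2 with hK
  have hK0 : 0 < K := by positivity
  set E := Real.exp ((K ^ P - 1) / (2 * P)) with hE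
  have hE0 : 0 < E := Real.exp_pos _
  obtain ⟨c, c0, hc⟩ := hf.vol κ k0 k1
  obtain ⟨c', c0', hc'⟩ := hq.vol κ k0 k1
  have hev : ∀ᶠ d : ℕ in atTop, κ ^ d ≤ c :=
    ((tendsto_pow_atTop_nhds_zero_of_lt_one k0.le k1).eventually_le_const c0)
  -- pointwise bound on the intersection
  have hinter : ∀ d, 1 ≤ d → volume (lpB p d (K * rR P d) ∩ lpB q d (R d)) ≤ ENNReal.ofReal ((E * ρ) ^ d) := by
    intro d hd
    have := chernoff (h := fun t => E * √(f t * g t)) (fun t => by positivity) (hI.const_mul E) d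
      (lpB p d (K * rR P d) ∩ lpB q d (R d)) ?_
    · rwa [integral_const_mul] at this
    · rintro x ⟨hx1, hx2⟩
      have a1 := dG_prod p hp d hd K hK0 x hx1
      have a2 := hq.le d hd x hx2
      have a3 : (0:ℝ) ≤ ∏ i, E * √(f (x i) * g (x i)) := Finset.prod_nonneg fun i _ => by positivity
      rw [← one_le_sq_iff₀ a3, ← Finset.prod_pow]
      have a4 : ∀ i, (E * √(f (x i) * g (x i))) ^ 2 = E ^ 2 * (f (x i) * g (x i)) := fun i => by
        rw [mul_pow, Real.sq_sqrt (mul_nonneg (hf.nonneg _) (hq.nonneg _))]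
      simp_rw [a4]
      rw [Finset.prod_mul_distrib, Finset.prod_mul_distrib, Finset.prod_const, Finset.card_univ, Fintype.card_fin]
      have a5 : E ^ 2 * Real.exp ((1 - K ^ P) / P) = 1 := by
        rw [hE, ← Real.exp_nat_mul, ← Real.exp_add, Real.exp_eq_one_iff]
        push_cast; field_simp; ring
      calc (1:ℝ) = (E ^ 2) ^ d * (Real.exp ((1 - K ^ P) / P) ^ d * 1) := by
            rw [mul_one, ← mul_pow, a5, one_pow]
        _ ≤ _ := by
            gcongr
            exact Finset.prod_nonneg fun i _ => hf.nonneg _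
  have hgeom : Tendsto (fun d : ℕ => ENNReal.ofReal (c'⁻¹ * (E * ρ / κ) ^ d)) atTop (nhds 0) := by
    have := (tendsto_pow_atTop_nhds_zero_of_lt_one (r := E * ρ / κ) (by positivity) hk).const_mul c'⁻¹
    rw [mul_zero] at this
    simpa using ENNReal.tendsto_ofReal this
  refine tendsto_of_tendsto_of_tendsto_of_le_of_le' tendsto_const_nhds hgeom
    (Eventually.of_forall fun _ => zero_le) ?_
  filter_upwards [hev, eventually_ge_atTop 1] with d hdc hd
  have r0 : 0 < rR P d := hf.pos d hd
  have R0 : 0 < R d := hq.pos d hd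
  set t := ε' d / R d with ht
  set u := ε d / rR P d / t with hu
  have t0 : 0 < t := div_pos (hε' d) R0
  have u0 : 0 < u := div_pos (div_pos (hε d) r0) t0
  have e1 : ε' d = t * R d := by rw [ht]; field_simp
  have e2 : ε d = t * (u * rR P d) := by rw [hu]; field_simp
  have hv := hvol d
  have td0 : ENNReal.ofReal (t ^ d) ≠ 0 := by
    rw [Ne, ENNReal.ofReal_eq_zero, not_le]; positivity
  have hsm : ∀ s : Set (Fin d → ℝ), ∀ a : ℝ, 0 < a → volume (a • s) = ENNReal.ofReal (a ^ d) * volume s := by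
    intro s a ha
    rw [Measure.addHaar_smul_of_nonneg volume ha.le]; simp
  rw [e1, e2, lpB_smul p d t0, lpB_smul q d t0, hsm _ _ t0, hsm _ _ t0,
    ENNReal.mul_right_inj td0 ENNReal.ofReal_ne_top, lpB_smul p d u0, hsm _ _ u0] at hv
  have hq1 : volume (lpB q d (R d)) ≤ 1 := by
    have := chernoff hq.nonneg gI d _ (hq.le d hd)
    simpa [hq.int] using this
  have huK : u ≤ K := by
    have h1 : ENNReal.ofReal (u ^ d * (c * κ ^ d)) ≤ 1 := by
      rw [ENNReal.ofReal_mul (by positivity)]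
      exact (mul_le_mul_right (hc d hd) _).trans (hv.le.trans hq1)
    rw [ENNReal.ofReal_le_one] at h1
    have h2 : (u * κ ^ 2) ^ d ≤ 1 := by
      calc (u * κ ^ 2) ^ d = u ^ d * (κ ^ d * κ ^ d) := by ring
        _ ≤ u ^ d * (c * κ ^ d) := by gcongr
        _ ≤ 1 := h1
    have h3 : u * κ ^ 2 ≤ 1 := by
      by_contra h
      push Not at h
      exact absurd h2 (not_le.2 (one_lt_pow₀ h (by omega)))
    rw [hK, inv_pow, ← one_div, le_div_iff₀ (by positivity)]
    exact h3
  rw [e1, e2, lpB_smul p d t0, lpB_smul q d t0, ← Set.smul_set_inter₀ t0.ne', hsm _ _ t0, hsm _ _ t0,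
    ENNReal.mul_div_mul_left _ _ td0 ENNReal.ofReal_ne_top]
  have hsub : lpB p d (u * rR P d) ∩ lpB q d (R d) ⊆ lpB p d (K * rR P d) ∩ lpB q d (R d) := by
    apply Set.inter_subset_inter_left
    intro x hx
    rw [lpB, Set.mem_ofPred_eq] at hx ⊢
    exact hx.trans (by gcongr)
  calc _ ≤ ENNReal.ofReal ((E * ρ) ^ d) / ENNReal.ofReal (c' * κ ^ d) :=
        ENNReal.div_le_div ((measure_mono hsub).trans (hinter d hd)) (hc' d hd)
    _ = ENNReal.ofReal (c'⁻¹ * (E * ρ / κ) ^ d) := by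
        rw [← ENNReal.ofReal_div_of_pos (by positivity), div_pow]
        congr 1
        field_simp

/-- Fix `1 ≤ p < q ≤ ∞` (so in particular `p ≠ q`). If for every dimension `d`
the radii `ε d, ε' d > 0` are chosen so that the Lebesgue volume of the `ℓ_p` ball
`B_{p,d}(ε d)` equals the Lebesgue volume of the `ℓ_q` ball `B_{q,d}(ε' d)`, then
`Vol(B_{p,d}(ε d) ∩ B_{q,d}(ε' d)) / Vol(B_{q,d}(ε' d)) → 0` as `d → ∞`. -/
theorem volume_ratio_inter_lp_balls_tendsto_zero
    (p q : ℝ≥0∞) [Fact (1 ≤ p)] [Fact (1 ≤ q)] (hpq : p < q)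
    (ε ε' : ℕ → ℝ) (hε : ∀ d, 0 < ε d) (hε' : ∀ d, 0 < ε' d)
    (hvol : ∀ d, volume {x : Fin d → ℝ | ‖(WithLp.equiv p (Fin d → ℝ)).symm x‖ ≤ ε d}
      = volume {x : Fin d → ℝ | ‖(WithLp.equiv q (Fin d → ℝ)).symm x‖ ≤ ε' d}) :
    Tendsto (fun d : ℕ =>
      volume ({x : Fin d → ℝ | ‖(WithLp.equiv p (Fin d → ℝ)).symm x‖ ≤ ε d}
          ∩ {x : Fin d → ℝ | ‖(WithLp.equiv q (Fin d → ℝ)).symm x‖ ≤ ε' d})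
        / volume {x : Fin d → ℝ | ‖(WithLp.equiv q (Fin d → ℝ)).symm x‖ ≤ ε' d})
      atTop (nhds 0) := by
  by_cases hq : q = ∞
  · subst hq
    exact main_aux p ∞ hpq _ _ good_top ε ε' hε hε' hvol
  · exact main_aux p q hpq _ _ (good_fin q hq) ε ε' hε hε' hvol
end
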